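/- arXiv:2201.10791 — 2 statements merged into one kernel-verified Lean document; each statement's English description precedes it below -/
import Mathlib

section
/- Let D = (V, A) be a digraph, let T ⊆ V, and let f : V → ℕ. Suppose that for every nonempty X ⊆ T one has Σ_{v ∈ N⁻(X)} f(v) ≥ |X|. Then there exists a branching B ⊆ A such that (i) every v ∈ T has exactly one arc of B with head v, and (ii) every v ∈ V is the tail of at most f(v) arcs of B. -/
/-- The in-neighborhood of a vertex set `X`: vertices outside `X` that are the
tail of some arc with head in `X`. -/
def inNbr {V A : Type} (tail head : A → V) (X : Set V) : Set V :=
  {y : V | y ∉ X ∧ ∃ a : A, tail a = y ∧ head a ∈ X}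

/-!
The function `X ↦ f(N⁻(X))` is submodular, so the tight subsets of `T` (those with
`f(N⁻(X)) = |X|`) having a given `r` with `f r > 0` as an in-neighbor are closed under intersection.
Hence, if `r ∈ N⁻(T)`, some arc `a` leaving `r` has its head in `T` and in all of these sets.
Lowering `f r` by one and deleting the head of `a` from `T` therefore preserves the condition on
`f`, and `a` can be added to the branching that induction yields for the smaller instance: neither
of its ends is the head of an arc there.
-/

section

open scoped Finset

variable {V A : Type} {tail head : A → V}

section Submodularity

variable {M : Type*} [AddCommMonoid M]

theorem inNbr_union_union_inter_subset (X Y : Set V) :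
    inNbr tail head (X ∪ Y) ∪ inNbr tail head (X ∩ Y) ⊆ inNbr tail head X ∪ inNbr tail head Y := by
  intro v
  simp only [inNbr, Set.mem_union, Set.mem_inter_iff, Set.mem_ofPred_eq]
  grind

theorem inNbr_union_inter_inter_subset (X Y : Set V) :
    inNbr tail head (X ∪ Y) ∩ inNbr tail head (X ∩ Y) ⊆ inNbr tail head X ∩ inNbr tail head Y := by
  intro v
  simp only [inNbr, Set.mem_union, Set.mem_inter_iff, Set.mem_ofPred_eq]
  grind

/-- The capacity `f(N⁻(X))` of the in-neighborhood of `X`. Only the vertices of the finite set `S`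
are counted, so that the sum makes sense in an infinite digraph. -/
noncomputable def inCapacity (tail head : A → V) (S : Finset V) (f : V → M) (X : Finset V) : M :=
  ∑ v ∈ S, (inNbr tail head X).indicator f v

theorem inCapacity_add (S : Finset V) (f g : V → M) (X : Finset V) :
    inCapacity tail head S (f + g) X =
      inCapacity tail head S f X + inCapacity tail head S g X := by
  simp only [inCapacity, Set.indicator_add', Pi.add_apply, Finset.sum_add_distrib]

theorem inCapacity_eq_finsum {S : Finset V} {f : V → M} (hf : f.support ⊆ S) (X : Finset V) :
    inCapacity tail head S f X = ∑ᶠ v ∈ inNbr tail head X, f v := by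
  have hsupp : ((inNbr tail head X).indicator f).support ⊆ S := by
    rw [Set.support_indicator]
    exact Set.inter_subset_right.trans hf
  rw [finsum_mem_def, finsum_eq_sum_of_support_subset _ hsupp, inCapacity]

variable [PartialOrder M] [CanonicallyOrderedAdd M] [DecidableEq V]

theorem indicator_inNbr_union_add_inter_le [IsOrderedAddMonoid M] (f : V → M) (X Y : Finset V)
    (v : V) :
    (inNbr tail head ↑(X ∪ Y)).indicator f v + (inNbr tail head ↑(X ∩ Y)).indicator f v ≤
      (inNbr tail head X).indicator f v + (inNbr tail head Y).indicator f v := by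
  rw [Finset.coe_union, Finset.coe_inter, ← Set.indicator_union_add_inter_apply,
    ← Set.indicator_union_add_inter_apply f (inNbr tail head X)]
  exact add_le_add
    (Set.indicator_le_indicator_of_subset (inNbr_union_union_inter_subset _ _) (fun _ => zero_le) v)
    (Set.indicator_le_indicator_of_subset (inNbr_union_inter_inter_subset _ _) (fun _ => zero_le) v)

theorem inCapacity_union_add_inter_le [IsOrderedAddMonoid M] (S : Finset V) (f : V → M)
    (X Y : Finset V) :
    inCapacity tail head S f (X ∪ Y) + inCapacity tail head S f (X ∩ Y) ≤
      inCapacity tail head S f X + inCapacity tail head S f Y := by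
  simp only [inCapacity, ← Finset.sum_add_distrib]
  exact Finset.sum_le_sum fun v _ => indicator_inNbr_union_add_inter_le f X Y v

theorem mem_inNbr_inter_of_inCapacity_add_le [IsOrderedCancelAddMonoid M] {S : Finset V}
    {f : V → M} {X Y : Finset V}
    (h : inCapacity tail head S f X + inCapacity tail head S f Y ≤
      inCapacity tail head S f (X ∪ Y) + inCapacity tail head S f (X ∩ Y))
    {r : V} (hrS : r ∈ S) (hfr : f r ≠ 0)
    (hrX : r ∈ inNbr tail head X) (hrY : r ∈ inNbr tail head Y) :
    r ∈ inNbr tail head ↑(X ∩ Y) := by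
  have hsum := (inCapacity_union_add_inter_le S f X Y).antisymm h
  simp only [inCapacity, ← Finset.sum_add_distrib] at hsum
  have hr := (Finset.sum_eq_sum_iff_of_le
    fun v _ => indicator_inNbr_union_add_inter_le f X Y v).1 hsum r hrS
  by_contra hrXY
  rw [Set.indicator_of_notMem hrXY, Set.indicator_of_mem hrX, Set.indicator_of_mem hrY,
    add_zero] at hr
  have hle : f r + f r ≤ f r := hr ▸ Set.indicator_le_self _ f r
  exact hfr (nonpos_iff_eq_zero.1 ((add_le_iff_nonpos_right _).1 hle))

end Submodularity

/-- The condition `|X| ≤ f(N⁻(X))` for all `X ⊆ T`, an analogue of Hall's marriage condition.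
As in `inCapacity`, only in-neighbors in `S` are counted. -/
def HallCondition (tail head : A → V) (S : Finset V) (f : V → ℕ) (T : Finset V) : Prop :=
  ∀ X ⊆ T, #X ≤ inCapacity tail head S f X

/-- The tight subsets of `T` that have `r` as an in-neighbor. Tightness is written as an inequality,
the other one being part of `HallCondition`. -/
def tightSets (tail head : A → V) (S : Finset V) (f : V → ℕ) (T : Finset V) (r : V) :
    Set (Finset V) :=
  {X | X ⊆ T ∧ r ∈ inNbr tail head X ∧ inCapacity tail head S f X ≤ #X}

namespace HallCondition

variable {S T : Finset V} {f : V → ℕ}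

theorem exists_pos_mem_inNbr (h : HallCondition tail head S f T) (hT : T.Nonempty) :
    ∃ r ∈ S, f r ≠ 0 ∧ r ∈ inNbr tail head T := by
  have hpos : ∑ v ∈ S, (inNbr tail head T).indicator f v ≠ 0 :=
    (hT.card_pos.trans_le (h T subset_rfl)).ne'
  obtain ⟨r, hrS, hr⟩ := Finset.exists_ne_zero_of_sum_ne_zero hpos
  exact ⟨r, hrS, (Set.indicator_apply_ne_zero.1 hr).symm⟩

theorem infClosed_tightSets [DecidableEq V] (h : HallCondition tail head S f T) {r : V}
    (hrS : r ∈ S) (hfr : f r ≠ 0) : InfClosed (tightSets tail head S f T r) := by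
  rintro X ⟨hXT, hrX, hX⟩ Y ⟨hYT, hrY, hY⟩
  have hXYT : X ∩ Y ⊆ T := Finset.inter_subset_left.trans hXT
  have hunion := h _ (Finset.union_subset hXT hYT)
  have hinter := h _ hXYT
  have hcard := Finset.card_union_add_card_inter X Y
  have hsub := inCapacity_union_add_inter_le (tail := tail) (head := head) S f X Y
  have htight : inCapacity tail head S f (X ∩ Y) ≤ #(X ∩ Y) := by omega
  exact ⟨hXYT, mem_inNbr_inter_of_inCapacity_add_le (by omega) hrS hfr hrX hrY, htight⟩

theorem exists_arc_head_mem_tightSets (h : HallCondition tail head S f T) {r : V} (hrS : r ∈ S)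
    (hfr : f r ≠ 0) (hrT : r ∈ inNbr tail head T) :
    ∃ a, tail a = r ∧ head a ∈ T ∧ ∀ X ∈ tightSets tail head S f T r, head a ∈ X := by
  classical
  obtain ⟨Z, hZT, hrZ, hZ⟩ : ∃ Z ⊆ T, r ∈ inNbr tail head Z ∧
      ∀ X ∈ tightSets tail head S f T r, Z ⊆ X := by
    have hfin : (tightSets tail head S f T r).Finite :=
      T.powerset.finite_toSet.subset fun X hX => Finset.mem_coe.2 (Finset.mem_powerset.2 hX.1)
    rcases (tightSets tail head S f T r).eq_empty_or_nonempty with hempty | hne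
    · exact ⟨T, subset_rfl, hrT, by simp [hempty]⟩
    · have hne' : hfin.toFinset.Nonempty := hfin.toFinset_nonempty.2 hne
      obtain ⟨hZT, hrZ, -⟩ := (h.infClosed_tightSets hrS hfr).finsetInf'_mem hne'
        (f := id) fun X hX => hfin.mem_toFinset.1 hX
      exact ⟨_, hZT, hrZ, fun X hX => Finset.inf'_le id (hfin.mem_toFinset.2 hX)⟩
  obtain ⟨-, a, har, haZ⟩ := hrZ
  exact ⟨a, har, hZT haZ, fun X hX => hZ X hX haZ⟩

theorem erase [DecidableEq V] {r w : V} (h : HallCondition tail head S (f + Pi.single r 1) T)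
    (hw : ∀ X ∈ tightSets tail head S (f + Pi.single r 1) T r, w ∈ X) :
    HallCondition tail head S f (T.erase w) := by
  intro X hX
  have hXT : X ⊆ T := hX.trans (T.erase_subset w)
  have hcap := h X hXT
  by_cases hrX : r ∈ inNbr tail head X
  · have hlt : #X < inCapacity tail head S (f + Pi.single r 1) X := by
      by_contra! hle
      exact Finset.notMem_erase w T (hX (hw X ⟨hXT, hrX, hle⟩))
    have hsingle : inCapacity tail head S (Pi.single r 1) X ≤ 1 :=
      calc ∑ v ∈ S, (inNbr tail head X).indicator (Pi.single r 1) v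
        _ ≤ ∑ v ∈ S, Pi.single r 1 v := Finset.sum_le_sum fun v _ => Set.indicator_le_self _ _ v
        _ ≤ 1 := by rw [Finset.sum_pi_single']; split_ifs <;> simp
    rw [inCapacity_add] at hlt
    omega
  · have hsingle : inCapacity tail head S (Pi.single r 1) X = 0 :=
      Finset.sum_eq_zero fun v _ => by
        by_cases hv : v = r
        · exact Set.indicator_of_notMem (hv ▸ hrX) _
        · simp [hv]
    rwa [inCapacity_add, hsingle, add_zero] at hcap

end HallCondition

variable [DecidableEq V]

/-- A finite set `B` of arcs is a branching: no two of its arcs have the same head, and every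
nonempty finite vertex set `X` spans fewer than `|X|` of them. -/
structure IsBranching (tail head : A → V) (B : Finset A) : Prop where
  injOn_head : Set.InjOn head B
  card_lt : ∀ X : Finset V, X.Nonempty → #{a ∈ B | tail a ∈ X ∧ head a ∈ X} < #X

namespace IsBranching

theorem empty : IsBranching tail head ∅ where
  injOn_head := by simp
  card_lt X hX := by simpa using hX

theorem insert [DecidableEq A] {B : Finset A} (hB : IsBranching tail head B) {a : A}
    (hloop : tail a ≠ head a) (htail : tail a ∉ B.image head) (hhead : head a ∉ B.image head) :
    IsBranching tail head (insert a B) where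
  injOn_head := by
    have haB : a ∉ (B : Set A) := fun ha => hhead (Finset.mem_image_of_mem head ha)
    rw [Finset.coe_insert, Set.injOn_insert haB, ← Finset.coe_image]
    exact ⟨hB.injOn_head, hhead⟩
  card_lt X hX := by
    rw [Finset.filter_insert]
    split_ifs with haX
    · have hends : {head a, tail a} ⊆ X := Finset.insert_subset haX.2 (by simpa using haX.1)
      have hle : #{b ∈ B | tail b ∈ X ∧ head b ∈ X} ≤ #(X \ {head a, tail a}) := by
        refine Finset.card_le_card_of_injOn head (fun b hb => ?_)
          (hB.injOn_head.mono (Finset.coe_subset.2 (Finset.filter_subset _ _)))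
        obtain ⟨hbB, -, hbX⟩ := Finset.mem_filter.1 hb
        have hb' := Finset.mem_image_of_mem head hbB
        simp only [Finset.coe_sdiff, Set.mem_sdiff, Finset.mem_coe, Finset.mem_insert,
          Finset.mem_singleton, not_or]
        exact ⟨hbX, fun h => hhead (h ▸ hb'), fun h => htail (h ▸ hb')⟩
      have hcard := Finset.card_sdiff_add_card_eq_card hends
      rw [Finset.card_pair hloop.symm] at hcard
      have hinsert := Finset.card_insert_le a {b ∈ B | tail b ∈ X ∧ head b ∈ X}
      omega
    · exact hB.card_lt X hX

theorem card_head_eq_le_one {B : Finset A} (hB : IsBranching tail head B) (v : V) :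
    #{a ∈ B | head a = v} ≤ 1 := by
  refine Finset.card_le_one.2 fun a ha b hb => ?_
  obtain ⟨haB, hav⟩ := Finset.mem_filter.1 ha
  obtain ⟨hbB, hbv⟩ := Finset.mem_filter.1 hb
  exact hB.injOn_head haB hbB (hav.trans hbv.symm)

theorem card_head_eq_one {B : Finset A} (hB : IsBranching tail head B) {v : V}
    (hv : v ∈ B.image head) : #{a ∈ B | head a = v} = 1 := by
  obtain ⟨a, haB, hav⟩ := Finset.mem_image.1 hv
  exact (hB.card_head_eq_le_one v).antisymm
    (Finset.card_pos.2 ⟨a, Finset.mem_filter.2 ⟨haB, hav⟩⟩)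

end IsBranching

theorem HallCondition.exists_isBranching {S T : Finset V} {f : V → ℕ}
    (h : HallCondition tail head S f T) :
    ∃ B : Finset A, IsBranching tail head B ∧ B.image head = T ∧
      ∀ v, #{a ∈ B | tail a = v} ≤ f v := by
  classical
  induction T using Finset.strongInduction generalizing f with
  | H T ih =>
    rcases T.eq_empty_or_nonempty with rfl | hT
    · exact ⟨∅, .empty, by simp, by simp⟩
    obtain ⟨r, hrS, hfr, hrT⟩ := h.exists_pos_mem_inNbr hT
    obtain ⟨a, rfl, haT, ha⟩ := h.exists_arc_head_mem_tightSets hrS hfr hrT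
    have hle : Pi.single (tail a) 1 ≤ f :=
      update_le_iff.2 ⟨Nat.one_le_iff_ne_zero.2 hfr, fun _ _ => zero_le⟩
    obtain ⟨g, rfl⟩ := le_iff_exists_add'.1 hle
    obtain ⟨B, hB, hBT, hBg⟩ := ih _ (Finset.erase_ssubset haT) (h.erase ha)
    have htail : tail a ∉ T := hrT.1
    refine ⟨insert a B, hB.insert (fun heq => htail (heq ▸ haT)) ?_ ?_, ?_, fun v => ?_⟩
    · exact hBT ▸ fun hmem => htail (Finset.mem_of_mem_erase hmem)
    · exact hBT ▸ Finset.notMem_erase _ _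
    · rw [Finset.image_insert, hBT, Finset.insert_erase haT]
    · rw [Finset.filter_insert]
      split_ifs with hav
      · subst hav
        simpa using (Finset.card_insert_le _ _).trans (Nat.succ_le_succ (hBg (tail a)))
      · exact (hBg v).trans (Nat.le_add_right _ _)

end

theorem stmt3_general {V A : Type} (tail head : A → V) {T : Set V} (hT : T.Finite)
    {f : V → ℕ} (hf : f.support.Finite)
    (hcond : ∀ X : Set V, X ⊆ T → X.Nonempty →
      X.ncard ≤ ∑ᶠ v ∈ inNbr tail head X, f v) :
    ∃ B : Set A, B.Finite ∧
      (∀ v : V, {a : A | a ∈ B ∧ head a = v}.ncard ≤ 1) ∧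
      (∀ X : Set V, X.Finite → X.Nonempty →
        {a : A | a ∈ B ∧ tail a ∈ X ∧ head a ∈ X}.ncard ≤ X.ncard - 1) ∧
      (∀ v ∈ T, {a : A | a ∈ B ∧ head a = v}.ncard = 1) ∧
      (∀ v : V, {a : A | a ∈ B ∧ tail a = v}.ncard ≤ f v) := by
  classical
  lift T to Finset V using hT
  have hall : HallCondition tail head hf.toFinset f T := by
    intro X hXT
    rcases X.eq_empty_or_nonempty with rfl | hX
    · simp
    · rw [inCapacity_eq_finsum hf.coe_toFinset.ge, ← Set.ncard_coe_finset]
      exact hcond X (Finset.coe_subset.2 hXT) (Finset.coe_nonempty.2 hX)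
  obtain ⟨B, hB, hBT, hBf⟩ := hall.exists_isBranching
  have hcard (p : A → Prop) [DecidablePred p] :
      {a | a ∈ (B : Set A) ∧ p a}.ncard = (B.filter p).card := by
    rw [← Set.ncard_coe_finset, Finset.coe_filter]; rfl
  refine ⟨B, B.finite_toSet, fun v => ?_, fun X hXfin hX => ?_, fun v hv => ?_, fun v => ?_⟩
  · exact (hcard _).trans_le (hB.card_head_eq_le_one v)
  · lift X to Finset V using hXfin
    rw [Set.ncard_coe_finset]
    exact (hcard _).trans_le (Nat.le_sub_one_of_lt (hB.card_lt X (Finset.coe_nonempty.1 hX)))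
  · exact (hcard _).trans (hB.card_head_eq_one (hBT ▸ hv))
  · exact (hcard _).trans_le (hBf v)

/-- if `Σ_{v ∈ N⁻(X)} f(v) ≥ |X|` for all nonempty `X ⊆ T`, then
there is a branching with in-degree exactly `1` at every vertex of `T` and
out-degree at most `f(v)` at every vertex `v`. -/
theorem stmt3 {V A : Type} [Fintype V] [Fintype A]
    (tail head : A → V) (hloop : ∀ a : A, tail a ≠ head a)
    (T : Set V) (f : V → ℕ)
    (hcond : ∀ X : Set V, X ⊆ T → X.Nonempty →
      X.ncard ≤ ∑ᶠ v ∈ inNbr tail head X, f v) :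
    ∃ B : Set A,
      (∀ v : V, {a : A | a ∈ B ∧ head a = v}.ncard ≤ 1) ∧
      (∀ X : Set V, X.Nonempty →
        {a : A | a ∈ B ∧ tail a ∈ X ∧ head a ∈ X}.ncard ≤ X.ncard - 1) ∧
      (∀ v ∈ T, {a : A | a ∈ B ∧ head a = v}.ncard = 1) ∧
      (∀ v : V, {a : A | a ∈ B ∧ tail a = v}.ncard ≤ f v) := by
  obtain ⟨B, -, hin, hspan, hT, hout⟩ := stmt3_general tail head T.toFinite f.support.toFinite hcond
  exact ⟨B, hin, fun X => hspan X X.toFinite, hT, hout⟩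
end

section
/- Let k and d be positive integers, let D = (V, A) be a digraph, and let v ∈ V be a vertex whose in-degree satisfies 1 ≤ d⁻(v) ≤ k. Let A_v ⊆ A be the set of arcs with head v. If A ∖ A_v can be partitioned into k+1 pseudo-branchings C′₁, …, C′_k, C′_{k+1} with Δ⁺(C′_{k+1}) ≤ d, then A can be partitioned into k+1 pseudo-branchings C₁, …, C_k, C_{k+1} with Δ⁺(C_{k+1}) ≤ d. -/
/-!
The at most `k` arcs into `v` are distributed over distinct classes among the first `k`. Since no
class contains an arc into `v` beforehand, each one receives at most one arc with head `v` and stays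
a pseudo-branching, and the last class does not change, so neither do its out-degrees.
-/

section

variable {V A ι : Type*} {head : A → V}

/-- A pseudo-branching: a set of arcs in which every vertex is the head of at most one arc, encoded
as injectivity of `head` so that it makes sense in infinite digraphs too. -/
def IsPseudoBranching (head : A → V) (C : Set A) : Prop :=
  Set.InjOn head C

theorem isPseudoBranching_iff_ncard_le_one [Finite A] {C : Set A} :
    IsPseudoBranching head C ↔ ∀ w, {a | a ∈ C ∧ head a = w}.ncard ≤ 1 := by
  simp only [Set.ncard_le_one_iff_subsingleton]
  constructor
  · rintro hC w a ⟨ha, haw⟩ b ⟨hb, hbw⟩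
    exact hC ha hb (haw.trans hbw.symm)
  · intro hC a ha b hb hab
    exact hC (head b) ⟨ha, hab⟩ ⟨hb, rfl⟩

/-- A decomposition of the arc set `S` into pseudo-branchings `C i`. Classes may be empty, so that
an index set of `k + 1` elements stands for at most `k + 1` nonempty classes. -/
structure IsPseudoBranchingPartition (head : A → V) (S : Set A) (C : ι → Set A) : Prop where
  disjoint : ∀ i j, i ≠ j → Disjoint (C i) (C j)
  iUnion_eq : ⋃ i, C i = S
  isPseudoBranching : ∀ i, IsPseudoBranching head (C i)

namespace IsPseudoBranchingPartition

variable {S T : Set A} {C E : ι → Set A}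

theorem subset (hC : IsPseudoBranchingPartition head S C) (i : ι) : C i ⊆ S :=
  hC.iUnion_eq ▸ Set.subset_iUnion C i

theorem union (hC : IsPseudoBranchingPartition head S C)
    (hE : IsPseudoBranchingPartition head T E) (hST : Disjoint (head '' S) (head '' T)) :
    IsPseudoBranchingPartition head (S ∪ T) fun i ↦ C i ∪ E i where
  disjoint i j hij := by
    have hCE (i j : ι) : Disjoint (C i) (E j) := hST.of_image.mono (hC.subset i) (hE.subset j)
    simp only [Set.disjoint_union_left, Set.disjoint_union_right]
    exact ⟨⟨hC.disjoint i j hij, (hCE j i).symm⟩, hCE i j, hE.disjoint i j hij⟩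
  iUnion_eq := by rw [Set.iUnion_union_distrib, hC.iUnion_eq, hE.iUnion_eq]
  isPseudoBranching i := by
    have head_ne : ∀ a ∈ C i, ∀ b ∈ E i, head a ≠ head b := fun a ha b hb ↦
      hST.ne_of_mem (Set.mem_image_of_mem head (hC.subset i ha))
        (Set.mem_image_of_mem head (hE.subset i hb))
    exact (Set.injOn_union (hST.of_image.mono (hC.subset i) (hE.subset i))).2
      ⟨hC.isPseudoBranching i, hE.isPseudoBranching i, head_ne⟩

theorem of_embedding (head : A → V) (f : S ↪ ι) :
    IsPseudoBranchingPartition head S fun i ↦ Subtype.val '' (f ⁻¹' {i}) where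
  disjoint i j hij := (Set.disjoint_image_iff Subtype.val_injective).2 <|
    (Set.disjoint_singleton.2 hij).preimage f
  iUnion_eq := by
    rw [← Set.image_iUnion, ← Set.preimage_iUnion, Set.iUnion_of_singleton, Set.preimage_univ,
      Subtype.coe_image_univ]
  isPseudoBranching i :=
    ((Set.subsingleton_singleton.preimage f.injective).image _).injOn head

end IsPseudoBranchingPartition

-- Extra conditions on a class outside the range of `f`, such as `Δ⁺ ≤ d`, survive the extension.
theorem stmt6_general {v : V} {C' : ι → Set A} (f : {a | head a = v} ↪ ι)
    (hC' : IsPseudoBranchingPartition head {a | head a ≠ v} C') :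
    ∃ C : ι → Set A, IsPseudoBranchingPartition head Set.univ C ∧
      ∀ i ∉ Set.range f, C i = C' i := by
  have heads_disjoint : Disjoint (head '' {a | head a ≠ v}) (head '' {a | head a = v}) := by
    rw [Set.disjoint_left]
    rintro _ ⟨a, ha, rfl⟩ ⟨b, hb, hba⟩
    exact ha (hba.symm.trans hb)
  have arcs_union : {a | head a ≠ v} ∪ {a | head a = v} = Set.univ := Set.compl_union_self _
  refine ⟨_, arcs_union ▸ hC'.union (.of_embedding head f) heads_disjoint, fun i hi ↦ ?_⟩
  rw [Set.preimage_singleton_eq_empty.2 hi, Set.image_empty, Set.union_empty]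

end

/-- if `v` has in-degree between `1` and `k`, and `A ∖ A_v`
(the arcs not heading into `v`) decomposes into `k+1` pseudo-branchings with the
last one of out-degree at most `d`, then so does the whole arc set `A`. -/
theorem stmt6 {V A : Type} [Fintype V] [Fintype A]
    (tail head : A → V) (hloop : ∀ a : A, tail a ≠ head a)
    (k d : ℕ) (hk : 0 < k) (hd : 0 < d)
    (v : V) (h1 : 1 ≤ {a : A | head a = v}.ncard) (h2 : {a : A | head a = v}.ncard ≤ k)
    (C' : Fin (k + 1) → Set A)
    (hdisj : ∀ i j, i ≠ j → Disjoint (C' i) (C' j))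
    (hcover : (⋃ i, C' i) = {a : A | head a ≠ v})
    (hpb : ∀ i, ∀ w : V, {a : A | a ∈ C' i ∧ head a = w}.ncard ≤ 1)
    (hout : ∀ w : V, {a : A | a ∈ C' (Fin.last k) ∧ tail a = w}.ncard ≤ d) :
    ∃ C : Fin (k + 1) → Set A,
      (∀ i j, i ≠ j → Disjoint (C i) (C j)) ∧
      (⋃ i, C i) = Set.univ ∧
      (∀ i, ∀ w : V, {a : A | a ∈ C i ∧ head a = w}.ncard ≤ 1) ∧
      (∀ w : V, {a : A | a ∈ C (Fin.last k) ∧ tail a = w}.ncard ≤ d) := by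
  let f : {a | head a = v} ↪ Fin k :=
    (Finite.equivFin _).toEmbedding.trans (Fin.castLEEmb ((Nat.card_coe_set_eq _).trans_le h2))
  obtain ⟨C, hC, hC_eq⟩ := stmt6_general (f.trans Fin.castSuccEmb)
    ⟨hdisj, hcover, fun i ↦ isPseudoBranching_iff_ncard_le_one.2 (hpb i)⟩
  have last_eq : C (Fin.last k) = C' (Fin.last k) :=
    hC_eq _ fun ⟨a, ha⟩ ↦ Fin.castSucc_ne_last (f a) ha
  exact ⟨C, hC.disjoint, hC.iUnion_eq,
    fun i ↦ isPseudoBranching_iff_ncard_le_one.1 (hC.isPseudoBranching i), last_eq ▸ hout⟩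
end
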